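/- arXiv:2511.19309 — 2 statements merged into one kernel-verified Lean document; each statement's English description precedes it below -/
import Mathlib

section
/- Let 𝒫 be a generalized perimeter satisfying assumption (H), let L > 0, R > 0, E₀ ∈ 𝔠_L ∩ 𝔐_R, and let {E^0_t}_{t ≥ 0} be a flat flow with initial datum E₀ along a vanishing sequence {h_k} of time steps. Then there exists a constant λ ∈ [−R, R] such that the subgraph functions f_{E^0_t} converge uniformly on 𝕋^{d−1} to the constant λ as t → +∞. -/
open MeasureTheory Filter Set
open scoped ENNReal

noncomputable section

/-- The flat torus `𝕋^{d-1}`. -/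
abbrev Torus (d : ℕ) : Type := Fin (d-1) → AddCircle (1:ℝ)

/-- The periodic strip `𝕋^{d-1} × ℝ`. -/
abbrev Cyl (d : ℕ) : Type := Torus d × ℝ

/-- The subgraph of a function `g : 𝕋^{d-1} → ℝ`. -/
def subgraph (d : ℕ) (g : Torus d → ℝ) : Set (Cyl d) := {x | x.2 ≤ g x.1}

/-- The class `𝔠_L` of periodic `L`-Lipschitz subgraphs. -/
def LipClass (d : ℕ) (L : ℝ) : Set (Set (Cyl d)) :=
  {E | ∃ g : Torus d → ℝ, LipschitzWith (Real.toNNReal L) g ∧ E = subgraph d g}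

/-- The slab `𝕊^d_R = 𝕋^{d-1} × (-R, R)`. -/
def SlabR (d : ℕ) (R : ℝ) : Set (Cyl d) := {x | -R < x.2 ∧ x.2 < R}

/-- The class `𝔐_R` of measurable sets squeezed between two halfspaces. -/
def MR (d : ℕ) (R : ℝ) : Set (Set (Cyl d)) :=
  {E | MeasurableSet E ∧ {x : Cyl d | x.2 < -R} ⊆ E ∧ E ⊆ {x : Cyl d | x.2 < R}}

/-- The periodic halfspace `H_λ = 𝕋^{d-1} × (-∞, λ)`. -/
def halfspace (d : ℕ) (lam : ℝ) : Set (Cyl d) := {x | x.2 < lam}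

/-- Translation of `𝕋^{d-1} × ℝ` by a vector `τ ∈ ℝ^d = ℝ^{d-1} × ℝ`,
acting through the quotient. -/
def translCyl (d : ℕ) (τ : (Fin (d-1) → ℝ) × ℝ) (x : Cyl d) : Cyl d :=
  (fun i => x.1 i + (τ.1 i : AddCircle (1:ℝ)), x.2 + τ.2)

/-- A generalized perimeter: a functional `𝒫 : 𝔐 → [0,+∞]` satisfying properties
(i)-(vi) of Definition 1.2. -/
structure GenPerimeter (d : ℕ) where
  P : Set (Cyl d) → ℝ≥0∞
  /-- (i) finiteness on periodic Lipschitz subgraphs -/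
  lip_finite : ∀ L : ℝ, 0 < L → ∀ E ∈ LipClass d L, P E < ⊤
  /-- (ii) `𝒫(∅) = 0` -/
  empty_eq : P ∅ = 0
  /-- (ii) `𝒫(𝕋^{d-1} × ℝ) = 0` -/
  univ_eq : P Set.univ = 0
  /-- (iii) invariance under modifications on null sets -/
  congr_ae : ∀ E E' : Set (Cyl d), volume (symmDiff E E') = 0 → P E = P E'
  /-- (iv) lower semicontinuity w.r.t. local `L¹` convergence -/
  lsc : ∀ (En : ℕ → Set (Cyl d)) (E : Set (Cyl d)),
      (∀ R : ℝ, 0 < R →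
        Tendsto (fun n => volume (symmDiff (En n) E ∩ SlabR d R)) atTop (nhds 0)) →
      P E ≤ liminf (fun n => P (En n)) atTop
  /-- (v) submodularity -/
  submodular : ∀ E F : Set (Cyl d), P (E ∪ F) + P (E ∩ F) ≤ P E + P F
  /-- (vi) translational invariance -/
  transl_inv : ∀ (E : Set (Cyl d)) (τ : (Fin (d-1) → ℝ) × ℝ), P (translCyl d τ '' E) = P E

/-- Signed distance from a set `E`. -/
def sdist (d : ℕ) (E : Set (Cyl d)) (x : Cyl d) : ℝ :=
  Metric.infDist x E - Metric.infDist x Eᶜ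

/-- The incremental functional `𝓕̃_h(E, F) = 𝒫(F) + (1/h) ∫_{F ∩ 𝕊^d_R} sdist_E`. -/
def Ftilde (d : ℕ) (P : GenPerimeter d) (R h : ℝ) (E F : Set (Cyl d)) : EReal :=
  (P.P F : EReal) + (((1/h) * ∫ x in F ∩ SlabR d R, sdist d E x) : ℝ)

/-- `F` minimizes `𝓕̃_h(E, ·)` in `𝔐_R`. -/
def IsMinimizer (d : ℕ) (P : GenPerimeter d) (R h : ℝ) (E F : Set (Cyl d)) : Prop :=
  F ∈ MR d R ∧ ∀ F' ∈ MR d R, Ftilde d P R h E F ≤ Ftilde d P R h E F'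

/-- The discrete-in-time approximate flat solution with time step `h`, initial datum `E₀`:
`Eh k` is the set at time `k h`; each step is the (unique, Lipschitz-subgraph) minimizer of
the incremental problem. -/
def IsApproxFlow (d : ℕ) (P : GenPerimeter d) (L R h : ℝ) (E₀ : Set (Cyl d))
    (Eh : ℕ → Set (Cyl d)) : Prop :=
  Eh 0 = E₀ ∧ ∀ k : ℕ, Eh (k+1) ∈ LipClass d L ∧ IsMinimizer d P R h (Eh k) (Eh (k+1))

/-- A flat flow `E0` with initial datum `E₀` along the vanishing sequence `hk` of time steps:
`Eflow k` is the approximate flat solution with time step `hk k`, and for every `t ≥ 0` the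
approximate solutions at time `t` converge in measure to `E0 t ∈ 𝔠_L`. -/
def IsFlatFlow (d : ℕ) (P : GenPerimeter d) (L R : ℝ) (hk : ℕ → ℝ) (E₀ : Set (Cyl d))
    (Eflow : ℕ → ℕ → Set (Cyl d)) (E0 : ℝ → Set (Cyl d)) : Prop :=
  E0 0 = E₀ ∧ (∀ t : ℝ, 0 ≤ t → E0 t ∈ LipClass d L) ∧
  (∀ k, IsApproxFlow d P L R (hk k) E₀ (Eflow k)) ∧
  (∀ t : ℝ, 0 ≤ t →
    Tendsto (fun k => volume (symmDiff (Eflow k ⌊t / hk k⌋₊) (E0 t))) atTop (nhds 0))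

/-- Oscillation of a function on the torus. -/
def osc (d : ℕ) (g : Torus d → ℝ) : ℝ := (⨆ x, g x) - (⨅ x, g x)

/-- Assumption (H): a quantitative dissipation inequality for vertical shrinkings of
Lipschitz subgraphs with oscillation bounded below. -/
def AssumptionH (d : ℕ) (P : GenPerimeter d) : Prop :=
  ∀ L : ℝ, 0 < L → ∀ δ : ℝ, 0 < δ →
    ∃ ε₀ ∈ Set.Ioo (0:ℝ) 1, ∃ C : ℝ, 0 < C ∧
      ∀ g : Torus d → ℝ, LipschitzWith (Real.toNNReal L) g → δ ≤ osc d g →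
        ∀ ε : ℝ, 0 < ε → ε ≤ ε₀ →
          P.P (subgraph d (fun x => (1 - ε) * g x)) + ENNReal.ofReal (C * ε)
            ≤ P.P (subgraph d g)

/-- The subgraph function of a set. -/
def graphFn (d : ℕ) (E : Set (Cyl d)) (x : Torus d) : ℝ := sSup {y : ℝ | (x, y) ∈ E}


lemma infDist_sub_le (d : ℕ) (f : Torus d → ℝ) (x : Torus d) (y : ℝ) :
    Metric.infDist (x, y) (subgraph d f) ≤ max 0 (y - f x) := by
  have hm : ((x, min y (f x)) : Cyl d) ∈ subgraph d f := by simp [subgraph]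
  refine (Metric.infDist_le_dist_of_mem hm).trans ?_
  rw [Prod.dist_eq]
  simp only [dist_self, Real.dist_eq]
  refine max_le (le_max_left _ _) ?_
  rcases le_total y (f x) with h | h
  · simp [h]
  · rw [min_eq_right h, abs_of_nonneg (by linarith)]; exact le_max_right _ _

lemma infDist_compl_le (d : ℕ) (f : Torus d → ℝ) (x : Torus d) (y : ℝ) :
    Metric.infDist (x, y) (subgraph d f)ᶜ ≤ max 0 (f x - y) := by
  refine le_of_forall_pos_le_add fun η hη => ?_
  have hm : ((x, max y (f x) + η) : Cyl d) ∈ (subgraph d f)ᶜ := by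
    simp only [subgraph, mem_compl_iff, mem_ofPred_eq, not_le]
    have := le_max_right y (f x); linarith
  refine (Metric.infDist_le_dist_of_mem hm).trans ?_
  rw [Prod.dist_eq]
  simp only [dist_self, Real.dist_eq]
  refine max_le (by have := le_max_left 0 (f x - y); linarith) ?_
  rcases le_total y (f x) with h | h
  · rw [max_eq_right h, abs_of_nonpos (by linarith)]
    have := le_max_right 0 (f x - y); linarith
  · rw [max_eq_left h, abs_of_nonpos (by linarith)]
    have := le_max_left 0 (f x - y); linarith

lemma le_infDist_sub (d : ℕ) {L : ℝ} (hL : 0 < L) {f : Torus d → ℝ}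
    (hf : LipschitzWith (Real.toNNReal L) f) (x : Torus d) (y : ℝ) :
    (y - f x) / (1 + L) ≤ Metric.infDist (x, y) (subgraph d f) := by
  rw [Metric.le_infDist ⟨(x, f x), by simp [subgraph]⟩]
  rintro ⟨z, w⟩ hz
  have hz' : w ≤ f z := hz
  rw [div_le_iff₀ (by linarith)]
  have h1 : dist x z ≤ dist ((x, y) : Cyl d) (z, w) := by rw [Prod.dist_eq]; exact le_max_left _ _
  have h2 : dist y w ≤ dist ((x, y) : Cyl d) (z, w) := by rw [Prod.dist_eq]; exact le_max_right _ _
  have h3 := hf.dist_le_mul x z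
  rw [Real.coe_toNNReal _ hL.le] at h3
  rw [Real.dist_eq] at h2 h3
  have h4 := le_abs_self (y - w)
  have h5 := neg_abs_le (f x - f z)
  have h6 := mul_le_mul_of_nonneg_left h1 hL.le
  nlinarith

lemma le_infDist_compl (d : ℕ) {L : ℝ} (hL : 0 < L) {f : Torus d → ℝ}
    (hf : LipschitzWith (Real.toNNReal L) f) (x : Torus d) (y : ℝ) :
    (f x - y) / (1 + L) ≤ Metric.infDist (x, y) (subgraph d f)ᶜ := by
  rw [Metric.le_infDist ⟨(x, f x + 1), by simp [subgraph]⟩]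
  rintro ⟨z, w⟩ hz
  have hz' : f z < w := by simpa [subgraph] using hz
  rw [div_le_iff₀ (by linarith)]
  have h1 : dist x z ≤ dist ((x, y) : Cyl d) (z, w) := by rw [Prod.dist_eq]; exact le_max_left _ _
  have h2 : dist y w ≤ dist ((x, y) : Cyl d) (z, w) := by rw [Prod.dist_eq]; exact le_max_right _ _
  have h3 := hf.dist_le_mul x z
  rw [Real.coe_toNNReal _ hL.le] at h3
  rw [Real.dist_eq] at h2 h3
  have h4 := neg_abs_le (y - w)
  have h5 := le_abs_self (f x - f z)
  have h6 := mul_le_mul_of_nonneg_left h1 hL.le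
  nlinarith

lemma sdist_ge (d : ℕ) {L : ℝ} (hL : 0 < L) {f : Torus d → ℝ}
    (hf : LipschitzWith (Real.toNNReal L) f) (x : Torus d) (y : ℝ) (h : f x ≤ y) :
    (y - f x) / (1 + L) ≤ sdist d (subgraph d f) (x, y) := by
  have h1 := le_infDist_sub d hL hf x y
  have h2 := infDist_compl_le d f x y
  rw [max_eq_left (by linarith)] at h2
  unfold sdist; linarith

lemma sdist_le (d : ℕ) {L : ℝ} (hL : 0 < L) {f : Torus d → ℝ}
    (hf : LipschitzWith (Real.toNNReal L) f) (x : Torus d) (y : ℝ) (h : y ≤ f x) :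
    sdist d (subgraph d f) (x, y) ≤ (y - f x) / (1 + L) := by
  have h1 := le_infDist_compl d hL hf x y
  have h2 := infDist_sub_le d f x y
  rw [max_eq_left (by linarith)] at h2
  have : (y - f x) / (1 + L) = -((f x - y) / (1 + L)) := by ring
  unfold sdist; linarith

lemma abs_sdist_le (d : ℕ) (f : Torus d → ℝ) (x : Torus d) (y : ℝ) :
    |sdist d (subgraph d f) (x, y)| ≤ |y - f x| := by
  have h1 := infDist_compl_le d f x y
  have h2 := infDist_sub_le d f x y
  have h3 : 0 ≤ Metric.infDist (x, y) (subgraph d f)ᶜ := Metric.infDist_nonneg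
  have h4 : 0 ≤ Metric.infDist (x, y) (subgraph d f) := Metric.infDist_nonneg
  have h5 : max 0 (f x - y) ≤ |y - f x| := max_le (abs_nonneg _) (by have := neg_abs_le (y - f x); linarith)
  have h6 : max 0 (y - f x) ≤ |y - f x| := max_le (abs_nonneg _) (le_abs_self _)
  unfold sdist
  rw [abs_le]; constructor <;> linarith

lemma sdist_cont (d : ℕ) (E : Set (Cyl d)) : Continuous (sdist d E) := by
  unfold sdist
  exact (Metric.continuous_infDist_pt _).sub (Metric.continuous_infDist_pt _)

/-- vertical integral lower bound -/
lemma int_lower (d : ℕ) {L : ℝ} (hL : 0 < L) {f : Torus d → ℝ}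
    (hf : LipschitzWith (Real.toNNReal L) f) (x : Torus d) (a b : ℝ)
    (h : (f x ≤ a ∧ a ≤ b) ∨ (b ≤ a ∧ a ≤ f x)) :
    (b - a) ^ 2 / (2 * (1 + L)) ≤ ∫ y in a..b, sdist d (subgraph d f) (x, y) := by
  have hc : Continuous (fun y : ℝ => sdist d (subgraph d f) (x, y)) :=
    (sdist_cont d _).comp (by fun_prop)
  have hc2 : Continuous (fun y : ℝ => (y - a) / (1 + L)) := by fun_prop
  have hp : 0 < 1 + L := by linarith
  have key : (b - a) ^ 2 / (2 * (1 + L)) = ∫ y in a..b, (y - a) / (1 + L) := by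
    rw [intervalIntegral.integral_div, intervalIntegral.integral_sub (by simp) (by simp)]
    simp only [integral_id, intervalIntegral.integral_const, smul_eq_mul]
    field_simp; ring
  rw [key]
  rcases h with ⟨h1, h2⟩ | ⟨h1, h2⟩
  · refine intervalIntegral.integral_mono_on h2 (hc2.intervalIntegrable _ _) (hc.intervalIntegrable _ _) ?_
    intro y hy
    refine le_trans ?_ (sdist_ge d hL hf x y (h1.trans hy.1))
    gcongr
  · rw [intervalIntegral.integral_symm b a, intervalIntegral.integral_symm b a]
    apply neg_le_neg
    refine intervalIntegral.integral_mono_on h1 (hc.intervalIntegrable _ _) (hc2.intervalIntegrable _ _) ?_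
    intro y hy
    refine le_trans (sdist_le d hL hf x y (hy.2.trans h2)) ?_
    gcongr

lemma vol_torus (d : ℕ) : (volume : Measure (Torus d)) univ = 1 := by
  rw [MeasureTheory.volume_pi, Measure.pi_univ]
  simp

instance (d : ℕ) : IsProbabilityMeasure (volume : Measure (Torus d)) := ⟨vol_torus d⟩

lemma cont_integrable (d : ℕ) {f : Torus d → ℝ} (hf : Continuous f) : Integrable f :=
  hf.integrable_of_hasCompactSupport (HasCompactSupport.of_compactSpace f)

lemma sub_meas (d : ℕ) {u : Torus d → ℝ} (hu : Continuous u) : MeasurableSet (subgraph d u) :=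
  (isClosed_le continuous_snd (hu.comp continuous_fst)).measurableSet

lemma slab_meas (d : ℕ) (R : ℝ) : MeasurableSet (SlabR d R) :=
  ((isOpen_lt continuous_const continuous_snd).inter
    (isOpen_lt continuous_snd continuous_const)).measurableSet

lemma phi_eq (d : ℕ) {R : ℝ} {u : Torus d → ℝ} (hu : Continuous u)
    (h1 : ∀ x, -R ≤ u x) (h2 : ∀ x, u x < R) {s : Cyl d → ℝ} (hs : Continuous s) :
    ∫ x in subgraph d u ∩ SlabR d R, s x = ∫ x, ∫ y in (-R)..(u x), s (x, y) := by
  have hmeas := (sub_meas d hu).inter (slab_meas d R)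
  have hint : IntegrableOn s (subgraph d u ∩ SlabR d R) := by
    have hK : IsCompact ((univ : Set (Torus d)) ×ˢ Icc (-R) R) := isCompact_univ.prod isCompact_Icc
    refine (hs.continuousOn.integrableOn_compact hK).mono_set ?_
    rintro ⟨x, y⟩ ⟨_, hy⟩
    exact ⟨mem_univ _, hy.1.le, hy.2.le⟩
  rw [← integral_indicator hmeas]
  rw [← integrable_indicator_iff hmeas] at hint
  rw [show (volume : Measure (Cyl d)) = (volume : Measure (Torus d)).prod (volume : Measure ℝ) from rfl] at hint ⊢
  rw [integral_prod _ hint]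
  congr 1
  ext x
  rw [intervalIntegral.integral_of_le (h1 x), ← integral_indicator measurableSet_Ioc]
  congr 1
  ext y
  have : ((x, y) : Cyl d) ∈ subgraph d u ∩ SlabR d R ↔ y ∈ Ioc (-R) (u x) := by
    simp only [subgraph, SlabR, mem_inter_iff, mem_ofPred_eq, mem_Ioc]
    have := h2 x
    constructor
    · rintro ⟨a, b, c⟩; exact ⟨b, a⟩
    · rintro ⟨a, b⟩; exact ⟨b, a, by linarith⟩
  by_cases hy : y ∈ Ioc (-R) (u x)
  · rw [indicator_of_mem (this.2 hy), indicator_of_mem hy]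
  · rw [indicator_of_notMem (fun h => hy (this.1 h)), indicator_of_notMem hy]

lemma phi_cont (d : ℕ) {u v : Torus d → ℝ} (hu : Continuous u) (hv : Continuous v)
    {s : Cyl d → ℝ} (hs : Continuous s) : Continuous (fun x => ∫ y in (u x)..(v x), s (x, y)) := by
  have h : ∀ w : Torus d → ℝ, Continuous w → Continuous (fun x => ∫ y in (0:ℝ)..(w x), s (x, y)) :=
    fun w hw => intervalIntegral.continuous_parametric_intervalIntegral_of_continuous
      (f := fun x y => s (x, y)) hs hw
  have : (fun x => ∫ y in (u x)..(v x), s (x, y)) =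
      fun x => (∫ y in (0:ℝ)..(v x), s (x, y)) - ∫ y in (0:ℝ)..(u x), s (x, y) := by
    ext x
    have hc : Continuous (fun y : ℝ => s (x, y)) := hs.comp (by fun_prop)
    rw [intervalIntegral.integral_interval_sub_left] <;> exact hc.intervalIntegrable _ _
  rw [this]
  exact (h v hv).sub (h u hu)

lemma mem_MR_iff (d : ℕ) {R : ℝ} {u : Torus d → ℝ} (hu : Continuous u) :
    subgraph d u ∈ MR d R ↔ ∀ x, -R ≤ u x ∧ u x < R := by
  constructor
  · rintro ⟨_, h1, h2⟩ x
    constructor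
    · by_contra h
      push Not at h
      obtain ⟨z, hz1, hz2⟩ := exists_between h
      have : ((x, z) : Cyl d) ∈ subgraph d u := h1 hz2
      have : z ≤ u x := this
      linarith
    · exact h2 (show ((x, u x) : Cyl d) ∈ subgraph d u by simp [subgraph])
  · intro h
    refine ⟨sub_meas d hu, ?_, ?_⟩
    · rintro ⟨x, y⟩ hy
      have hy' : y < -R := hy
      show y ≤ u x
      linarith [(h x).1]
    · rintro ⟨x, y⟩ hy
      have hy' : y ≤ u x := hy
      show y < R
      linarith [(h x).2]

/-- real form of minimality -/
lemma min_real (d : ℕ) (P : GenPerimeter d) {L R h : ℝ} (hL : 0 < L)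
    {E : Set (Cyl d)} {g u : Torus d → ℝ}
    (hg : LipschitzWith (Real.toNNReal L) g) (hu : LipschitzWith (Real.toNNReal L) u)
    (hmin : IsMinimizer d P R h E (subgraph d g)) (huR : ∀ x, -R ≤ u x ∧ u x < R) :
    (P.P (subgraph d g)).toReal + (1 / h) * ∫ x, ∫ y in (u x)..(g x), sdist d E (x, y)
      ≤ (P.P (subgraph d u)).toReal := by
  have h1 := hmin.2 _ ((mem_MR_iff d hu.continuous).2 huR)
  have hgR := (mem_MR_iff d hg.continuous).1 hmin.1
  have hs := sdist_cont d E
  unfold Ftilde at h1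
  rw [phi_eq d hg.continuous (fun x => (hgR x).1) (fun x => (hgR x).2) hs,
    phi_eq d hu.continuous (fun x => (huR x).1) (fun x => (huR x).2) hs] at h1
  have fg := P.lip_finite L hL _ ⟨g, hg, rfl⟩
  have fu := P.lip_finite L hL _ ⟨u, hu, rfl⟩
  rw [← ENNReal.ofReal_toReal fg.ne, ← ENNReal.ofReal_toReal fu.ne] at h1
  rw [EReal.coe_ennreal_ofReal, EReal.coe_ennreal_ofReal,
    max_eq_left ENNReal.toReal_nonneg, max_eq_left ENNReal.toReal_nonneg] at h1
  norm_cast at h1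
  have : ∫ x, ∫ y in (u x)..(g x), sdist d E (x, y) =
      (∫ x, ∫ y in (-R)..(g x), sdist d E (x, y)) - ∫ x, ∫ y in (-R)..(u x), sdist d E (x, y) := by
    rw [← integral_sub]
    · congr 1
      ext x
      have hc : Continuous (fun y : ℝ => sdist d E (x, y)) := hs.comp (by fun_prop)
      rw [intervalIntegral.integral_interval_sub_left] <;> exact hc.intervalIntegrable _ _
    · exact cont_integrable d (phi_cont d continuous_const hg.continuous hs)
    · exact cont_integrable d (phi_cont d continuous_const hu.continuous hs)
  rw [this, mul_sub]
  linarith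

lemma transl_sub (d : ℕ) (P : GenPerimeter d) (u : Torus d → ℝ) (c : ℝ) :
    P.P (subgraph d (fun x => u x + c)) = P.P (subgraph d u) := by
  rw [← P.transl_inv (subgraph d u) (0, c)]
  congr 1
  ext ⟨x, y⟩
  simp only [subgraph, translCyl, mem_image, mem_ofPred_eq, Prod.exists, Prod.mk.injEq]
  constructor
  · intro h
    refine ⟨x, y - c, by linarith, ?_, by ring⟩
    ext i; simp
  · rintro ⟨a, b, h1, h2, h3⟩
    have : a = x := by rw [← h2]; ext i; simp
    subst this; linarith

lemma band_vol (d : ℕ) {u : Torus d → ℝ} (hu : Continuous u) (a : ℝ) :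
    (volume : Measure (Cyl d)) {x | |x.2 - u x.1| ≤ a} ≤ ENNReal.ofReal (2 * a) := by
  have hm : MeasurableSet {x : Cyl d | |x.2 - u x.1| ≤ a} :=
    (isClosed_le (by fun_prop) continuous_const).measurableSet
  rw [show (volume : Measure (Cyl d)) = (volume : Measure (Torus d)).prod (volume : Measure ℝ) from rfl]
  rw [Measure.prod_apply hm]
  have : ∀ x : Torus d, (volume : Measure ℝ) (Prod.mk x ⁻¹' {x : Cyl d | |x.2 - u x.1| ≤ a}) = ENNReal.ofReal (2 * a) := by
    intro x
    have : Prod.mk x ⁻¹' {x : Cyl d | |x.2 - u x.1| ≤ a} = Metric.closedBall (u x) a := by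
      ext y; simp [Real.dist_eq]
    rw [this, Real.volume_closedBall]
  rw [lintegral_congr this, lintegral_const, vol_torus, mul_one]

lemma bdd_cont (d : ℕ) {u : Torus d → ℝ} (hu : Continuous u) :
    BddAbove (range u) ∧ BddBelow (range u) := by
  have := isCompact_range hu
  exact ⟨this.bddAbove, this.bddBelow⟩

lemma lip_smul (d : ℕ) {L : ℝ} {g : Torus d → ℝ}
    (hg : LipschitzWith (Real.toNNReal L) g) {s : ℝ} (h0 : 0 ≤ s) (h1 : s ≤ 1) :
    LipschitzWith (Real.toNNReal L) (fun x => s * g x) := by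
  refine LipschitzWith.of_dist_le_mul fun x y => ?_
  have h := hg.dist_le_mul x y
  rw [Real.dist_eq] at h ⊢
  rw [← mul_sub, abs_mul, abs_of_nonneg h0]
  have := abs_nonneg (g x - g y)
  nlinarith

lemma osc_smul (d : ℕ) (g : Torus d → ℝ) {s : ℝ} (h0 : 0 ≤ s) :
    osc d (fun x => s * g x) = s * osc d g := by
  unfold osc
  rw [← Real.mul_iSup_of_nonneg h0, ← Real.mul_iInf_of_nonneg h0, mul_sub]

lemma scale_tendsto (d : ℕ) {g : Torus d → ℝ} (hg : Continuous g) (s : ℕ → ℝ) (s₀ : ℝ)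
    (hs : Tendsto s atTop (nhds s₀)) (R : ℝ) :
    Tendsto (fun n => volume (symmDiff (subgraph d (fun x => s n * g x))
      (subgraph d (fun x => s₀ * g x)) ∩ SlabR d R)) atTop (nhds 0) := by
  obtain ⟨B, hB⟩ : ∃ B, ∀ x, |g x| ≤ B := by
    obtain ⟨B, hB⟩ := (bdd_cont d hg.abs).1
    exact ⟨B, fun x => hB ⟨x, rfl⟩⟩
  have hlim : Tendsto (fun n => ENNReal.ofReal (2 * (|s n - s₀| * B))) atTop (nhds 0) := by
    have : Tendsto (fun n => 2 * (|s n - s₀| * B)) atTop (nhds (2 * (|s₀ - s₀| * B))) :=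
      (((hs.sub_const s₀).abs).mul_const B).const_mul 2
    simpa using ENNReal.tendsto_ofReal this
  refine tendsto_of_tendsto_of_tendsto_of_le_of_le tendsto_const_nhds hlim (fun _ => zero_le) ?_
  intro n
  refine le_trans (measure_mono ?_) (band_vol d (u := fun x => s₀ * g x) (by fun_prop) _)
  rintro ⟨x, y⟩ ⟨h, _⟩
  have hb : |s n * g x - s₀ * g x| ≤ |s n - s₀| * B := by
    rw [← sub_mul, abs_mul]
    exact mul_le_mul_of_nonneg_left (hB x) (abs_nonneg _)
  rw [abs_le] at hb
  show |y - s₀ * g x| ≤ |s n - s₀| * B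
  rw [abs_le]
  rcases h with ⟨h1, h2⟩ | ⟨h1, h2⟩
  · have h1' : y ≤ s n * g x := h1
    have h2' : s₀ * g x < y := not_le.1 h2
    constructor <;> linarith
  · have h1' : y ≤ s₀ * g x := h1
    have h2' : s n * g x < y := not_le.1 h2
    constructor <;> linarith

lemma const_le (d : ℕ) (P : GenPerimeter d) (hH : AssumptionH d P) {L : ℝ} (hL : 0 < L)
    {g : Torus d → ℝ} (hg : LipschitzWith (Real.toNNReal L) g) (c : ℝ) :
    P.P (subgraph d (fun _ => c)) ≤ P.P (subgraph d g) := by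
  have e0 : P.P (subgraph d (fun _ => c)) = P.P (subgraph d (fun _ => (0:ℝ))) := by
    rw [← transl_sub d P (fun _ => (0:ℝ)) c]; simp
  rw [e0]
  have hbd := bdd_cont d hg.continuous
  rcases lt_or_ge 0 (osc d g) with ho | ho
  · let S : Set ℝ := {s | 0 ≤ s ∧ s ≤ 1 ∧ P.P (subgraph d (fun x => s * g x)) ≤ P.P (subgraph d g)}
    have hne : S.Nonempty := ⟨1, by simp [S]⟩
    have hbb : BddBelow S := ⟨0, fun s hs => hs.1⟩
    obtain ⟨s, -, hs, hsS⟩ := exists_seq_tendsto_sInf hne hbb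
    set s₀ := sInf S with hs₀
    have hmem : s₀ ∈ S := by
      refine ⟨le_csInf hne fun s hs => hs.1, (csInf_le hbb (by simp [S] : (1:ℝ) ∈ S)), ?_⟩
      refine (P.lsc _ _ fun R _ => scale_tendsto d hg.continuous s s₀ hs R).trans ?_
      calc liminf (fun n => P.P (subgraph d (fun x => s n * g x))) atTop
          ≤ liminf (fun _ : ℕ => P.P (subgraph d g)) atTop :=
            liminf_le_liminf (Eventually.of_forall fun n => (hsS n).2.2)
        _ = _ := liminf_const _
    rcases hmem.1.eq_or_lt with h0 | h0
    · have := hmem.2.2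
      rw [← h0] at this
      simpa using this
    · exfalso
      have hos : 0 < osc d (fun x => s₀ * g x) := by rw [osc_smul d g h0.le]; positivity
      obtain ⟨ε, ⟨hε0, hε1⟩, C, hC, hh⟩ := hH L hL _ hos
      have := hh _ (lip_smul d hg hmem.1 hmem.2.1) le_rfl ε hε0 le_rfl
      have h2 : (1 - ε) * s₀ ∈ S := by
        refine ⟨mul_nonneg (by linarith) h0.le, by nlinarith [hmem.2.1], ?_⟩
        refine le_trans ?_ hmem.2.2
        refine le_trans ?_ this
        simp only [mul_assoc]
        exact le_self_add
      have h3 := csInf_le hbb h2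
      nlinarith
  · have hconst : ∀ x, g x = ⨆ x, g x := by
      intro x
      unfold osc at ho
      have h1 := le_ciSup hbd.1 x
      have h2 := ciInf_le hbd.2 x
      linarith
    have : g = fun _ => 0 + ⨆ x, g x := by ext x; rw [zero_add]; exact hconst x
    rw [this, transl_sub d P (fun _ => (0:ℝ)) _]

lemma inf_le_P (d : ℕ) (P : GenPerimeter d) (hH : AssumptionH d P) {L : ℝ} (hL : 0 < L)
    {g : Torus d → ℝ} (hg : LipschitzWith (Real.toNNReal L) g) (c : ℝ) :
    P.P (subgraph d (fun x => min (g x) c)) ≤ P.P (subgraph d g) ∧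
    P.P (subgraph d (fun x => max (g x) c)) ≤ P.P (subgraph d g) := by
  have hsub := P.submodular (subgraph d g) (subgraph d (fun _ => c))
  have e1 : subgraph d g ∪ subgraph d (fun _ => c) = subgraph d (fun x => max (g x) c) := by
    ext ⟨x, y⟩; simp [subgraph]
  have e2 : subgraph d g ∩ subgraph d (fun _ => c) = subgraph d (fun x => min (g x) c) := by
    ext ⟨x, y⟩; simp [subgraph]
  rw [e1, e2] at hsub
  have hc := P.lip_finite L hL _ ⟨fun _ => c, LipschitzWith.const' c, rfl⟩
  have h1 := const_le d P hH hL (hg.max_const c) c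
  have h2 := const_le d P hH hL (hg.min_const c) c
  constructor
  · rw [add_comm] at hsub
    exact (ENNReal.add_le_add_iff_right hc.ne).1 ((add_le_add le_rfl h1).trans hsub)
  · exact (ENNReal.add_le_add_iff_right hc.ne).1 ((add_le_add le_rfl h2).trans hsub)

/-- squares integrating to a nonpositive number vanish -/
lemma sq_zero (d : ℕ) {w : Torus d → ℝ} (hw : Continuous w) (h : ∫ x, (w x) ^ 2 ≤ 0) (x : Torus d) :
    w x = 0 := by
  have hc : Continuous (fun x => (w x) ^ 2) := hw.pow 2
  have h0 : ∫ x, (w x) ^ 2 = 0 := le_antisymm h (integral_nonneg fun x => sq_nonneg _)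
  rw [integral_eq_zero_iff_of_nonneg (fun x => sq_nonneg _) (cont_integrable d hc)] at h0
  have := (hc.ae_eq_iff_eq (μ := volume) continuous_const).1 h0
  have h2 : (w x) ^ 2 = 0 := congrFun this x
  exact pow_eq_zero_iff (two_ne_zero) |>.1 h2

/-- One step: comparison with a competitor between. -/
lemma step_aux (d : ℕ) (P : GenPerimeter d) {L R h : ℝ} (hL : 0 < L) (hh : 0 < h)
    {f g u : Torus d → ℝ} (hf : LipschitzWith (Real.toNNReal L) f)
    (hg : LipschitzWith (Real.toNNReal L) g) (hu : LipschitzWith (Real.toNNReal L) u)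
    (hmin : IsMinimizer d P R h (subgraph d f) (subgraph d g)) (huR : ∀ x, -R ≤ u x ∧ u x < R)
    (hb : ∀ x, (f x ≤ u x ∧ u x ≤ g x) ∨ (g x ≤ u x ∧ u x ≤ f x) ∨ g x = u x) :
    (P.P (subgraph d g)).toReal + (1 / h) * ((∫ x, (g x - u x) ^ 2) / (2 * (1 + L)))
      ≤ (P.P (subgraph d u)).toReal := by
  refine le_trans ?_ (min_real d P hL hg hu hmin huR)
  gcongr
  rw [← integral_div]
  have hc : Continuous (fun x => (g x - u x) ^ 2 / (2 * (1 + L))) :=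
    ((hg.continuous.sub hu.continuous).pow 2).div_const _
  refine integral_mono (cont_integrable d hc)
    (cont_integrable d (phi_cont d hu.continuous hg.continuous (sdist_cont d _))) ?_
  intro x
  rcases hb x with h1 | h1 | h1
  · exact int_lower d hL hf x _ _ (Or.inl h1)
  · exact int_lower d hL hf x _ _ (Or.inr h1)
  · simp [h1]

lemma step_zero (d : ℕ) (P : GenPerimeter d) {L R h : ℝ} (hL : 0 < L) (hh : 0 < h)
    {f g u : Torus d → ℝ} (hf : LipschitzWith (Real.toNNReal L) f)
    (hg : LipschitzWith (Real.toNNReal L) g) (hu : LipschitzWith (Real.toNNReal L) u)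
    (hmin : IsMinimizer d P R h (subgraph d f) (subgraph d g)) (huR : ∀ x, -R ≤ u x ∧ u x < R)
    (hb : ∀ x, (f x ≤ u x ∧ u x ≤ g x) ∨ (g x ≤ u x ∧ u x ≤ f x) ∨ g x = u x)
    (hP : P.P (subgraph d u) ≤ P.P (subgraph d g)) (x : Torus d) : g x = u x := by
  have h1 := step_aux d P hL hh hf hg hu hmin huR hb
  have h2 := ENNReal.toReal_mono (P.lip_finite L hL _ ⟨g, hg, rfl⟩).ne hP
  have h3 : (1 / h) * ((∫ x, (g x - u x) ^ 2) / (2 * (1 + L))) ≤ 0 := by linarith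
  have h4 : (∫ x, (g x - u x) ^ 2) ≤ 0 := by
    by_contra hcon
    push Not at hcon
    have : 0 < (1 / h) * ((∫ x, (g x - u x) ^ 2) / (2 * (1 + L))) := by positivity
    linarith
  have : g x - u x = 0 := sq_zero d (hg.continuous.sub hu.continuous) h4 x
  linarith

lemma step_bounds (d : ℕ) (P : GenPerimeter d) (hH : AssumptionH d P) {L R h : ℝ}
    (hL : 0 < L) (hh : 0 < h)
    {f g : Torus d → ℝ} (hf : LipschitzWith (Real.toNNReal L) f)
    (hg : LipschitzWith (Real.toNNReal L) g) (hfR : ∀ x, -R ≤ f x ∧ f x < R)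
    (hmin : IsMinimizer d P R h (subgraph d f) (subgraph d g)) (m M : ℝ)
    (hm : ∀ x, m ≤ f x) (hM : ∀ x, f x ≤ M) (x : Torus d) : m ≤ g x ∧ g x ≤ M := by
  have hgR := (mem_MR_iff d hg.continuous).1 hmin.1
  constructor
  · have := step_zero d P hL hh hf hg (hg.max_const m) hmin
      (fun x => ⟨(hgR x).1.trans (le_max_left _ _), max_lt (hgR x).2 ((hm x).trans_lt (hfR x).2)⟩)
      (fun x => by
        rcases le_total (g x) m with h1 | h1
        · right; left; rw [max_eq_right h1]; exact ⟨h1, hm x⟩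
        · right; right; rw [max_eq_left h1])
      (inf_le_P d P hH hL hg m).2 x
    rw [this]; exact le_max_right _ _
  · have := step_zero d P hL hh hf hg (hg.min_const M) hmin
      (fun x => ⟨le_min (hgR x).1 ((hfR x).1.trans (hM x)), (min_le_left _ _).trans_lt (hgR x).2⟩)
      (fun x => by
        rcases le_total M (g x) with h1 | h1
        · left; rw [min_eq_right h1]; exact ⟨hM x, h1⟩
        · right; right; rw [min_eq_left h1])
      (inf_le_P d P hH hL hg M).1 x
    rw [this]; exact min_le_right _ _

/-- Velocity lower bound. -/
lemma step_velocity (d : ℕ) (P : GenPerimeter d) {L R h δ ε₀ C : ℝ} (hR : 0 < R)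
    (hL : 0 < L) (hh : 0 < h) (hε₀ : 0 < ε₀) (hε1 : ε₀ < 1) (hC : 0 < C)
    (hHC : ∀ g : Torus d → ℝ, LipschitzWith (Real.toNNReal L) g → δ ≤ osc d g →
        ∀ ε : ℝ, 0 < ε → ε ≤ ε₀ →
          P.P (subgraph d (fun x => (1 - ε) * g x)) + ENNReal.ofReal (C * ε)
            ≤ P.P (subgraph d g))
    {f g : Torus d → ℝ} (hf : LipschitzWith (Real.toNNReal L) f)
    (hg : LipschitzWith (Real.toNNReal L) g)
    (hmin : IsMinimizer d P R h (subgraph d f) (subgraph d g)) (ho : δ ≤ osc d g) :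
    C * h ≤ R * ∫ x, |g x - f x| := by
  have hgR := (mem_MR_iff d hg.continuous).1 hmin.1
  have hgR' : ∀ x, |g x| ≤ R := fun x => abs_le.2 ⟨(hgR x).1, (hgR x).2.le⟩
  have hcA : Continuous (fun x => |g x - f x|) := (hg.continuous.sub hf.continuous).abs
  have key : ∀ ε, 0 < ε → ε ≤ ε₀ → C * h ≤ R * ((∫ x, |g x - f x|) + ε * R) := by
    intro ε h0 h1
    have hu := lip_smul d hg (s := 1 - ε) (by linarith) (by linarith)
    have huR : ∀ x, -R ≤ (1 - ε) * g x ∧ (1 - ε) * g x < R := by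
      intro x
      have := hgR x
      constructor
      · nlinarith
      · nlinarith
    have a1 := min_real d P hL hg hu hmin huR
    have a2 := ENNReal.toReal_mono (P.lip_finite L hL _ ⟨g, hg, rfl⟩).ne (hHC g hg ho ε h0 h1)
    rw [ENNReal.toReal_add (P.lip_finite L hL _ ⟨_, hu, rfl⟩).ne ENNReal.ofReal_ne_top,
      ENNReal.toReal_ofReal (by positivity)] at a2
    have a3 : -(∫ x, ∫ y in ((1 - ε) * g x)..(g x), sdist d (subgraph d f) (x, y)) ≤
        ε * R * ((∫ x, |g x - f x|) + ε * R) := by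
      have e : ε * R * ((∫ x, |g x - f x|) + ε * R) = ∫ x, ε * R * (|g x - f x| + ε * R) := by
        rw [integral_const_mul, integral_add (cont_integrable d hcA) (integrable_const _)]
        simp
      rw [e, ← integral_neg]
      refine integral_mono (cont_integrable d (phi_cont d hu.continuous hg.continuous (sdist_cont d _))).neg
        (cont_integrable d (by fun_prop)) ?_
      intro x
      have hb : ∀ y ∈ Set.uIoc ((1 - ε) * g x) (g x),
          ‖sdist d (subgraph d f) (x, y)‖ ≤ |g x - f x| + ε * R := by
        intro y hy
        rw [Real.norm_eq_abs]
        refine (abs_sdist_le d f x y).trans ?_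
        have hy1 : |y - g x| ≤ ε * R := by
          have hy2 : |y - g x| ≤ |(1 - ε) * g x - g x| := by
            rcases le_total ((1 - ε) * g x) (g x) with hle | hle
            · rw [Set.uIoc_of_le hle] at hy
              rw [abs_of_nonpos (by linarith [hy.2]), abs_of_nonpos (by linarith)]
              linarith [hy.1]
            · rw [Set.uIoc_of_ge hle] at hy
              rw [abs_of_nonneg (by linarith [hy.1]), abs_of_nonneg (by linarith)]
              linarith [hy.2]
          refine hy2.trans ?_
          rw [show (1 - ε) * g x - g x = -(ε * g x) by ring, abs_neg, abs_mul, abs_of_pos h0]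
          exact mul_le_mul_of_nonneg_left (hgR' x) h0.le
        have := abs_add_le (y - g x) (g x - f x)
        rw [sub_add_sub_cancel] at this
        linarith
      have b1 := intervalIntegral.norm_integral_le_of_norm_le_const hb
      rw [Real.norm_eq_abs, show g x - (1 - ε) * g x = ε * g x by ring, abs_mul, abs_of_pos h0] at b1
      have b2 := neg_le_abs (∫ y in ((1 - ε) * g x)..(g x), sdist d (subgraph d f) (x, y))
      have b3 : (|g x - f x| + ε * R) * (ε * |g x|) ≤ ε * R * (|g x - f x| + ε * R) := by
        have : ε * |g x| ≤ ε * R := mul_le_mul_of_nonneg_left (hgR' x) h0.le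
        have h' : 0 ≤ |g x - f x| + ε * R := by positivity
        nlinarith
      show -(∫ y in ((1 - ε) * g x)..(g x), sdist d (subgraph d f) (x, y)) ≤ _
      linarith
    set I := ∫ x, ∫ y in ((1 - ε) * g x)..(g x), sdist d (subgraph d f) (x, y)
    set A := ∫ x, |g x - f x|
    have a4 : C * ε ≤ (1 / h) * (-I) := by linarith
    have a5 : C * ε * h ≤ -I := by
      rw [one_div, ← div_eq_inv_mul, le_div_iff₀ hh] at a4
      exact a4
    have a6 : ε * (C * h) ≤ ε * (R * (A + ε * R)) := by nlinarith
    exact le_of_mul_le_mul_left a6 h0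
  set A := ∫ x, |g x - f x|
  have hlim : Tendsto (fun ε : ℝ => R * (A + ε * R)) (nhdsWithin 0 (Ioi 0)) (nhds (R * (A + 0 * R))) :=
    (Continuous.tendsto (by fun_prop) 0).mono_left nhdsWithin_le_nhds
  rw [zero_mul, add_zero] at hlim
  refine ge_of_tendsto hlim ?_
  filter_upwards [Ioc_mem_nhdsGT hε₀] with ε hε
  exact key ε hε.1 hε.2

lemma step_diss (d : ℕ) (P : GenPerimeter d) {L R h δ ε₀ C : ℝ} (hR : 0 < R)
    (hL : 0 < L) (hh : 0 < h) (hε₀ : 0 < ε₀) (hε1 : ε₀ < 1) (hC : 0 < C)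
    (hHC : ∀ g : Torus d → ℝ, LipschitzWith (Real.toNNReal L) g → δ ≤ osc d g →
        ∀ ε : ℝ, 0 < ε → ε ≤ ε₀ →
          P.P (subgraph d (fun x => (1 - ε) * g x)) + ENNReal.ofReal (C * ε)
            ≤ P.P (subgraph d g))
    {f g : Torus d → ℝ} (hf : LipschitzWith (Real.toNNReal L) f) (hfR : ∀ x, -R ≤ f x ∧ f x < R)
    (hg : LipschitzWith (Real.toNNReal L) g)
    (hmin : IsMinimizer d P R h (subgraph d f) (subgraph d g)) (ho : δ ≤ osc d g) :
    (P.P (subgraph d g)).toReal + C ^ 2 / (2 * (1 + L) * R ^ 2) * h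
      ≤ (P.P (subgraph d f)).toReal := by
  have hv := step_velocity d P hR hL hh hε₀ hε1 hC hHC hf hg hmin ho
  refine le_trans ?_ (step_aux d P hL hh hf hg hf hmin hfR ?_)
  · refine add_le_add le_rfl ?_
    have hcA : Continuous (fun x => |g x - f x|) := (hg.continuous.sub hf.continuous).abs
    have hcB : Continuous (fun x => (g x - f x) ^ 2) := (hg.continuous.sub hf.continuous).pow 2
    set A := ∫ x, |g x - f x| with hA
    have hcs : A ^ 2 ≤ ∫ x, (g x - f x) ^ 2 := by
      have h0 : 0 ≤ ∫ x, (|g x - f x| - A) ^ 2 := integral_nonneg fun x => sq_nonneg _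
      have e : ∫ x, (|g x - f x| - A) ^ 2 = (∫ x, (g x - f x) ^ 2) - A ^ 2 := by
        have : ∀ x, (|g x - f x| - A) ^ 2 = ((g x - f x) ^ 2 - 2 * A * |g x - f x|) + A ^ 2 := by
          intro x; rw [← sq_abs (g x - f x)]; ring
        simp_rw [this]
        have hi : Integrable (fun x => (g x - f x) ^ 2 - 2 * A * |g x - f x|) :=
          cont_integrable d (hcB.sub (hcA.const_mul _))
        rw [integral_add hi (integrable_const _),
          integral_sub (cont_integrable d hcB) ((cont_integrable d hcA).const_mul _),
          integral_const_mul, ← hA]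
        simp; ring
      linarith
    have h1 : (C * h / R) ^ 2 ≤ A ^ 2 := by
      have : C * h / R ≤ A := by rw [div_le_iff₀ hR]; linarith
      gcongr
    calc C ^ 2 / (2 * (1 + L) * R ^ 2) * h = (1 / h) * ((C * h / R) ^ 2 / (2 * (1 + L))) := by
          field_simp
      _ ≤ _ := by gcongr ?_ * (?_ / _); exact h1.trans hcs
  · intro x
    rcases le_total (f x) (g x) with h1 | h1
    · left; exact ⟨le_rfl, h1⟩
    · right; left; exact ⟨h1, le_rfl⟩

lemma dens_lower (d : ℕ) {f : Torus d → ℝ} (hf : Continuous f) (fk : ℕ → Torus d → ℝ)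
    (h : Tendsto (fun k => volume (symmDiff (subgraph d (fk k)) (subgraph d f))) atTop (nhds 0))
    (x : Torus d) {η : ℝ} (hη : 0 < η) : ∀ᶠ k in atTop, ∃ z, f x - η < fk k z := by
  let O : Set (Cyl d) := {p | f x - η < p.2} ∩ {p | p.2 < f p.1}
  have hO : IsOpen O := (isOpen_lt continuous_const continuous_snd).inter
    (isOpen_lt continuous_snd (hf.comp continuous_fst))
  have hne : O.Nonempty := ⟨(x, f x - η / 2),
    by show f x - η < f x - η / 2; linarith, by show f x - η / 2 < f x; linarith⟩
  have hpos := hO.measure_pos (volume : Measure (Cyl d)) hne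
  filter_upwards [h.eventually_lt_const hpos] with k hk
  by_contra hcon
  push Not at hcon
  refine absurd hk (not_lt.2 (measure_mono ?_))
  rintro ⟨z, w⟩ ⟨h1, h2⟩
  have h1' : f x - η < w := h1
  have h2' : w < f z := h2
  refine Or.inr ⟨h2'.le, ?_⟩
  intro h3
  have h3' : w ≤ fk k z := h3
  linarith [hcon z]

lemma dens_upper (d : ℕ) {f : Torus d → ℝ} (hf : Continuous f) (fk : ℕ → Torus d → ℝ)
    (h : Tendsto (fun k => volume (symmDiff (subgraph d (fk k)) (subgraph d f))) atTop (nhds 0))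
    (x : Torus d) {η : ℝ} (hη : 0 < η) : ∀ᶠ k in atTop, ∃ z, fk k z < f x + η := by
  let O : Set (Cyl d) := {p | p.2 < f x + η} ∩ {p | f p.1 < p.2}
  have hO : IsOpen O := (isOpen_lt continuous_snd continuous_const).inter
    (isOpen_lt (hf.comp continuous_fst) continuous_snd)
  have hne : O.Nonempty := ⟨(x, f x + η / 2),
    by show f x + η / 2 < f x + η; linarith, by show f x < f x + η / 2; linarith⟩
  have hpos := hO.measure_pos (volume : Measure (Cyl d)) hne
  filter_upwards [h.eventually_lt_const hpos] with k hk
  by_contra hcon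
  push Not at hcon
  refine absurd hk (not_lt.2 (measure_mono ?_))
  rintro ⟨z, w⟩ ⟨h1, h2⟩
  have h1' : w < f x + η := h1
  have h2' : f z < w := h2
  exact Or.inl ⟨h1'.le.trans (hcon z), not_le.2 h2'⟩

lemma disc_bounds (d : ℕ) (P : GenPerimeter d) (hH : AssumptionH d P) {L R h : ℝ}
    (hL : 0 < L) (hh : 0 < h) {fs : ℕ → Torus d → ℝ}
    (hlip : ∀ n, LipschitzWith (Real.toNNReal L) (fs n))
    (hfR : ∀ n x, -R ≤ fs n x ∧ fs n x < R)
    (hmin : ∀ n, IsMinimizer d P R h (subgraph d (fs n)) (subgraph d (fs (n + 1))))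
    (m M : ℝ) (n : ℕ) (hb : ∀ x, m ≤ fs n x ∧ fs n x ≤ M) :
    ∀ n', n ≤ n' → ∀ x, m ≤ fs n' x ∧ fs n' x ≤ M := by
  intro n' hn
  induction n', hn using Nat.le_induction with
  | base => exact hb
  | succ j hj ih =>
    intro x
    exact step_bounds d P hH hL hh (hlip j) (hlip (j + 1)) (hfR j) (hmin j) m M
      (fun x => (ih x).1) (fun x => (ih x).2) x

lemma disc_osc (d : ℕ) (P : GenPerimeter d) (hH : AssumptionH d P) {L R h : ℝ}
    (hL : 0 < L) (hh : 0 < h) {fs : ℕ → Torus d → ℝ}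
    (hlip : ∀ n, LipschitzWith (Real.toNNReal L) (fs n))
    (hfR : ∀ n x, -R ≤ fs n x ∧ fs n x < R)
    (hmin : ∀ n, IsMinimizer d P R h (subgraph d (fs n)) (subgraph d (fs (n + 1))))
    (n n' : ℕ) (hn : n ≤ n') : osc d (fs n') ≤ osc d (fs n) := by
  have hbd := bdd_cont d (hlip n).continuous
  have := disc_bounds d P hH hL hh hlip hfR hmin (⨅ x, fs n x) (⨆ x, fs n x) n
    (fun x => ⟨ciInf_le hbd.2 x, le_ciSup hbd.1 x⟩) n' hn
  unfold osc
  exact sub_le_sub (ciSup_le fun x => (this x).2) (le_ciInf fun x => (this x).1)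

lemma disc_time (d : ℕ) (P : GenPerimeter d) (hH : AssumptionH d P) {L R h κ δ : ℝ}
    (hL : 0 < L) (hh : 0 < h) {fs : ℕ → Torus d → ℝ}
    (hlip : ∀ n, LipschitzWith (Real.toNNReal L) (fs n))
    (hfR : ∀ n x, -R ≤ fs n x ∧ fs n x < R)
    (hmin : ∀ n, IsMinimizer d P R h (subgraph d (fs n)) (subgraph d (fs (n + 1))))
    (hdiss : ∀ n, δ ≤ osc d (fs (n + 1)) →
      (P.P (subgraph d (fs (n + 1)))).toReal + κ * h ≤ (P.P (subgraph d (fs n))).toReal)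
    (n : ℕ) (ho : δ ≤ osc d (fs n)) : n * (κ * h) ≤ (P.P (subgraph d (fs 0))).toReal := by
  have key : ∀ j : ℕ, j ≤ n →
      (P.P (subgraph d (fs j))).toReal + j * (κ * h) ≤ (P.P (subgraph d (fs 0))).toReal := by
    intro j
    induction j with
    | zero => intro _; simp
    | succ j ih =>
      intro hj
      have h1 := ih (by omega)
      have h2 := hdiss j (ho.trans (disc_osc d P hH hL hh hlip hfR hmin _ _ hj))
      push_cast
      linarith
  have := key n le_rfl
  have h0 : 0 ≤ (P.P (subgraph d (fs n))).toReal := ENNReal.toReal_nonneg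
  linarith

lemma graphFn_sub (d : ℕ) (g : Torus d → ℝ) (x : Torus d) : graphFn d (subgraph d g) x = g x := by
  unfold graphFn
  have : {y : ℝ | (x, y) ∈ subgraph d g} = Iic (g x) := by ext y; simp [subgraph]
  rw [this, csSup_Iic]

/-- Under assumption (H), the flat flow converges uniformly to a halfspace as `t → +∞`. -/
theorem flatFlow_converges_to_halfspace (d : ℕ) (hd : 2 ≤ d) (P : GenPerimeter d)
    (hH : AssumptionH d P) (L R : ℝ) (hL : 0 < L) (hR : 0 < R)
    (E₀ : Set (Cyl d)) (hE₀ : E₀ ∈ LipClass d L ∩ MR d R)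
    (hk : ℕ → ℝ) (hkpos : ∀ k, 0 < hk k) (hkto : Tendsto hk atTop (nhds 0))
    (Eflow : ℕ → ℕ → Set (Cyl d)) (E0 : ℝ → Set (Cyl d))
    (hFF : IsFlatFlow d P L R hk E₀ Eflow E0) :
    ∃ lam ∈ Set.Icc (-R) R,
      TendstoUniformly (fun (t : ℝ) (x : Torus d) => graphFn d (E0 t) x)
        (fun _ => lam) atTop := by
  obtain ⟨h00, hLip0, happ, hconv⟩ := hFF
  -- subgraph functions of the approximate flows
  have hex : ∀ k n, ∃ g : Torus d → ℝ, LipschitzWith (Real.toNNReal L) g ∧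
      Eflow k n = subgraph d g := by
    intro k n
    cases n with
    | zero => rw [(happ k).1]; exact hE₀.1
    | succ n => exact ((happ k).2 n).1
  choose f hflip hfE using hex
  have hMR : ∀ k n, Eflow k n ∈ MR d R := by
    intro k n
    cases n with
    | zero => rw [(happ k).1]; exact hE₀.2
    | succ n => exact ((happ k).2 n).2.1
  have hfR : ∀ k n x, -R ≤ f k n x ∧ f k n x < R := by
    intro k n
    have := hMR k n
    rw [hfE k n, mem_MR_iff d (hflip k n).continuous] at this
    exact this
  have hmin : ∀ k n, IsMinimizer d P R (hk k) (subgraph d (f k n)) (subgraph d (f k (n + 1))) := by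
    intro k n
    have := ((happ k).2 n).2
    rwa [hfE k n, hfE k (n + 1)] at this
  have hf0 : ∀ k, subgraph d (f k 0) = E₀ := fun k => by rw [← hfE k 0, (happ k).1]
  -- subgraph functions of the limit flow
  have hg : ∀ t : ℝ, 0 ≤ t → LipschitzWith (Real.toNNReal L) (graphFn d (E0 t)) ∧
      E0 t = subgraph d (graphFn d (E0 t)) := by
    intro t ht
    obtain ⟨g, hg1, hg2⟩ := hLip0 t ht
    have : graphFn d (E0 t) = g := by rw [hg2]; ext x; exact graphFn_sub d g x
    rw [this]; exact ⟨hg1, hg2⟩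
  have hconv' : ∀ t : ℝ, 0 ≤ t → Tendsto (fun k => volume (symmDiff
      (subgraph d (f k ⌊t / hk k⌋₊)) (subgraph d (graphFn d (E0 t))))) atTop (nhds 0) := by
    intro t ht
    have := hconv t ht
    rw [(hg t ht).2] at this
    simpa only [hfE] using this
  have hrange : ∀ t : ℝ, 0 ≤ t → ∀ x, -R ≤ graphFn d (E0 t) x ∧ graphFn d (E0 t) x ≤ R := by
    intro t ht x
    constructor
    · refine le_of_forall_pos_le_add fun η hη => ?_
      obtain ⟨k, z, hz⟩ := (dens_upper d (hg t ht).1.continuous _ (hconv' t ht) x hη).exists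
      linarith [(hfR k ⌊t / hk k⌋₊ z).1]
    · refine le_of_forall_pos_le_add fun η hη => ?_
      obtain ⟨k, z, hz⟩ := (dens_lower d (hg t ht).1.continuous _ (hconv' t ht) x hη).exists
      linarith [(hfR k ⌊t / hk k⌋₊ z).2]
  have hcauchy : ∀ δ : ℝ, 0 < δ → ∃ T : ℝ, 0 ≤ T ∧ ∀ s t : ℝ, T ≤ s → T ≤ t → ∀ x y,
      graphFn d (E0 t) x ≤ graphFn d (E0 s) y + δ := by
    intro δ hδ
    obtain ⟨ε₀, ⟨hε0, hε1⟩, C, hC, hHC⟩ := hH L hL δ hδ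
    set κ := C ^ 2 / (2 * (1 + L) * R ^ 2) with hκ
    have hκ0 : 0 < κ := by positivity
    set p := (P.P E₀).toReal with hp
    have hp0 : 0 ≤ p := ENNReal.toReal_nonneg
    have hT0 : 0 ≤ p / κ + 1 := by positivity
    refine ⟨p / κ + 1, hT0, fun s t hs ht x y => ?_⟩
    have hs0 := hT0.trans hs
    have ht0 := hT0.trans ht
    refine le_of_forall_pos_le_add fun η hη => ?_
    have e1 := dens_lower d (hg t ht0).1.continuous _ (hconv' t ht0) x (half_pos hη)
    have e2 := dens_upper d (hg s hs0).1.continuous _ (hconv' s hs0) y (half_pos hη)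
    have e3 := hkto.eventually_lt_const one_pos
    obtain ⟨k, ⟨z, hz⟩, ⟨w, hw⟩, hk1⟩ := (e1.and (e2.and e3)).exists
    have hkp := hkpos k
    set N := ⌊(p / κ + 1) / hk k⌋₊ with hN
    have hosc : osc d (f k N) < δ := by
      by_contra hcon
      push Not at hcon
      have := disc_time d P hH hL hkp (hflip k) (hfR k) (hmin k) (κ := κ) (δ := δ)
        (fun n hn => step_diss d P hR hL hkp hε0 hε1 hC hHC (hflip k n) (hfR k n)
          (hflip k (n + 1)) (hmin k n) hn) N hcon
      rw [hf0 k] at this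
      have h1 := Nat.lt_floor_add_one ((p / κ + 1) / hk k)
      rw [← hN, div_lt_iff₀ hkp] at h1
      have h2 : p / κ < N * hk k := by linarith
      rw [div_lt_iff₀ hκ0] at h2
      linarith
    have hbd := bdd_cont d (hflip k N).continuous
    have hb := disc_bounds d P hH hL hkp (hflip k) (hfR k) (hmin k) (⨅ x, f k N x)
      (⨆ x, f k N x) N (fun x => ⟨ciInf_le hbd.2 x, le_ciSup hbd.1 x⟩)
    have b1 := (hb ⌊t / hk k⌋₊ (Nat.floor_mono (by gcongr)) z).2
    have b2 := (hb ⌊s / hk k⌋₊ (Nat.floor_mono (by gcongr)) w).1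
    unfold osc at hosc
    linarith
  -- limit
  let x₀ : Torus d := 0
  have hcs : CauchySeq (fun n : ℕ => graphFn d (E0 n) x₀) := by
    rw [Metric.cauchySeq_iff]
    intro δ hδ
    obtain ⟨T, hT0, hT⟩ := hcauchy (δ / 2) (half_pos hδ)
    refine ⟨⌈T⌉₊, fun m hm n hn => ?_⟩
    have hm' : T ≤ m := Nat.ceil_le.1 hm
    have hn' : T ≤ n := Nat.ceil_le.1 hn
    have h1 := hT m n hm' hn' x₀ x₀
    have h2 := hT n m hn' hm' x₀ x₀
    rw [Real.dist_eq, abs_lt]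
    constructor <;> linarith
  obtain ⟨lam, hlam⟩ := cauchySeq_tendsto_of_complete hcs
  refine ⟨lam, ⟨ge_of_tendsto' hlam fun n => (hrange n n.cast_nonneg x₀).1,
    le_of_tendsto' hlam fun n => (hrange n n.cast_nonneg x₀).2⟩, ?_⟩
  rw [Metric.tendstoUniformly_iff]
  intro δ hδ
  obtain ⟨T, hT0, hT⟩ := hcauchy (δ / 2) (half_pos hδ)
  filter_upwards [eventually_ge_atTop T] with t ht x
  have hev : ∀ᶠ n : ℕ in atTop, T ≤ (n : ℝ) := by
    filter_upwards [eventually_ge_atTop ⌈T⌉₊] with n hn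
    exact Nat.ceil_le.1 hn
  have h1 : lam ≤ graphFn d (E0 t) x + δ / 2 :=
    le_of_tendsto hlam (hev.mono fun n hn => hT t n ht hn x₀ x)
  have h2 : graphFn d (E0 t) x - δ / 2 ≤ lam :=
    ge_of_tendsto hlam (hev.mono fun n hn => by linarith [hT n t hn ht x x₀])
  rw [Real.dist_eq, abs_lt]
  constructor <;> linarith
end
end

section
/- Let d ≥ 2 and 0 < α < d−1. The α-Riesz perimeter 𝒫^α is submodular: for all E, F ∈ 𝔐 one has 𝒫^α(E ∪ F) + 𝒫^α(E ∩ F) ≤ 𝒫^α(E) + 𝒫^α(F). -/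
open MeasureTheory Filter Set
open scoped ENNReal

noncomputable section

/-- The periodic norm `‖ξ‖_♯ = (|ξ_d|² + min_{z'∈ℤ^{d-1}} |ξ̃' + z'|²)^{1/2}`. -/
def pnorm (d : ℕ) (ξ : Cyl d) : ℝ := Real.sqrt (ξ.2 ^ 2 + ∑ i, ‖ξ.1 i‖ ^ 2)

/-- The Riesz interaction `𝒥^α(E,F) = ∫_E ∫_F ‖x-y‖_♯^{-(d-α)} dy dx`. -/
def Jalpha (d : ℕ) (α : ℝ) (E F : Set (Cyl d)) : ℝ≥0∞ :=
  ∫⁻ x in E, ∫⁻ y in F, (ENNReal.ofReal (pnorm d (x - y))) ^ (-((d : ℝ) - α)) ∂volume ∂volume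

/-- The slab `𝕊^d_{R₁,R₂} = 𝕋^{d-1} × (R₁, R₂)`. -/
def slab2 (d : ℕ) (R₁ R₂ : ℝ) : Set (Cyl d) := {x | R₁ < x.2 ∧ x.2 < R₂}

/-- `𝒫^α_{R₁,R₂}(E) = 𝒥^α(𝕊,𝕊) - 𝒥^α(E∩𝕊, E∩𝕊)`. -/
def PalphaSlab (d : ℕ) (α R₁ R₂ : ℝ) (E : Set (Cyl d)) : ℝ≥0∞ :=
  Jalpha d α (slab2 d R₁ R₂) (slab2 d R₁ R₂)
    - Jalpha d α (E ∩ slab2 d R₁ R₂) (E ∩ slab2 d R₁ R₂)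

/-- `ρ_E < +∞`, i.e. `E` is contained in some halfspace `𝕋^{d-1} × (-∞, ρ)`. -/
def BddTop (d : ℕ) (E : Set (Cyl d)) : Prop := ∃ ρ : ℝ, E ⊆ {x : Cyl d | x.2 < ρ}

/-- `ρ_E = inf {ρ : E ⊆ 𝕋^{d-1} × (-∞, ρ)}`. -/
def rhoSup (d : ℕ) (E : Set (Cyl d)) : ℝ := sInf {ρ : ℝ | E ⊆ {x : Cyl d | x.2 < ρ}}

open Classical in
/-- The `α`-Riesz perimeter `𝒫^α` (the limits in `R` exist by monotonicity, so they
coincide with the `limsup`). -/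
def Palpha (d : ℕ) (α : ℝ) (E : Set (Cyl d)) : ℝ≥0∞ :=
  if E = ∅ then 0
  else if BddTop d E then limsup (fun R : ℝ => PalphaSlab d α (-R) (rhoSup d E) E) atTop
  else limsup (fun R : ℝ => PalphaSlab d α (-R) R E) atTop

theorem aux_pi_lint (n : ℕ) (μ : Measure (AddCircle (1:ℝ))) [SigmaFinite μ]
    (f : AddCircle (1:ℝ) → ℝ≥0∞) (hf : Measurable f) :
    ∫⁻ x : Fin n → AddCircle (1:ℝ), ∏ i, f (x i) ∂(Measure.pi fun _ => μ) = (∫⁻ x, f x ∂μ) ^ n := by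
  induction n with
  | zero => simp
  | succ n ih =>
    have h := (measurePreserving_piFinSuccAbove (fun _ : Fin (n+1) => μ) 0)
    rw [← (h.symm _).lintegral_comp_emb (MeasurableEquiv.measurableEmbedding _)]
    simp only [MeasurableEquiv.piFinSuccAbove_symm_apply, Fin.insertNthEquiv,
      Fin.prod_univ_succ, Fin.insertNth_zero]
    simp only [Equiv.coe_fn_mk, Fin.cons_zero, Fin.cons_succ]
    have := lintegral_prod_mul (μ := μ) (ν := Measure.pi fun _ : Fin n => μ) (f := f)
      (g := fun x => ∏ i, f (x i)) hf.aemeasurable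
      (Finset.measurable_prod _ fun i _ => hf.comp (measurable_pi_apply i)).aemeasurable
    rw [pow_succ', ← ih, ← this]
    rfl

theorem aux_1d (s M : ℝ) (hs : s < 1) :
    ∫⁻ t in Ioc (-M) M, (ENNReal.ofReal |t|) ^ (-s) < ∞ := by
  rcases le_or_gt M 0 with hM | hM
  · rw [Ioc_eq_empty (by linarith)]; simp
  have h1 : IntervalIntegrable (fun t : ℝ => |t| ^ (-s)) volume 0 M := by
    refine (intervalIntegral.intervalIntegrable_rpow' (r := -s) (by linarith)).congr ?_
    intro t ht
    rw [uIoc_of_le hM.le] at ht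
    simp [abs_of_pos ht.1]
  have h2 : IntervalIntegrable (fun t : ℝ => |t| ^ (-s)) volume (-M) 0 := by
    have := (IntervalIntegrable.iff_comp_neg).1 h1
    simpa using this.symm
  have h3 := h2.trans h1
  rw [intervalIntegrable_iff_integrableOn_Ioc_of_le (by linarith)] at h3
  have h4 := h3.lintegral_lt_top
  refine lt_of_le_of_lt (le_of_eq ?_) h4
  refine lintegral_congr_ae (ae_restrict_of_ae ?_)
  have : ∀ᵐ t : ℝ, t ≠ 0 := by simp [ae_iff]
  filter_upwards [this] with t ht
  rw [ENNReal.ofReal_rpow_of_pos (abs_pos.2 ht)]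

theorem aux_circ (s : ℝ) (hs : s < 1) :
    ∫⁻ t : AddCircle (1:ℝ), (ENNReal.ofReal ‖t‖) ^ (-s) < ∞ := by
  rw [← AddCircle.lintegral_preimage 1 (-(1/2))]
  refine lt_of_le_of_lt (le_of_eq ?_) (aux_1d s (1/2) hs)
  rw [show (-(1/2) + 1 : ℝ) = 1/2 by norm_num]
  refine setLIntegral_congr_fun measurableSet_Ioc ?_
  intro t ht
  have : ‖(t : AddCircle (1:ℝ))‖ = |t| := by
    rw [AddCircle.norm_coe_eq_abs_iff 1 one_ne_zero]
    rw [abs_one, abs_le]; exact ⟨by linarith [ht.1], ht.2⟩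
  simp only [this]

theorem aux_pnorm_cont (d : ℕ) : Continuous (pnorm d) := by
  unfold pnorm; fun_prop

theorem aux_ker_le (d : ℕ) (hd : 2 ≤ d) (α : ℝ) (hα' : α < (d : ℝ) - 1) (x : Cyl d) :
    (ENNReal.ofReal (pnorm d x)) ^ (-((d : ℝ) - α)) ≤
      (∏ i, (ENNReal.ofReal ‖x.1 i‖) ^ (-(((d : ℝ) - α) / d))) *
        (ENNReal.ofReal |x.2|) ^ (-(((d : ℝ) - α) / d)) := by
  have hd0 : (0:ℝ) < d := by positivity
  set s := ((d : ℝ) - α) / d with hs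
  have hs0 : 0 ≤ s := div_nonneg (by linarith) hd0.le
  have key : ∀ c : ℝ, c ≤ pnorm d x →
      (ENNReal.ofReal (pnorm d x)) ^ (-s) ≤ (ENNReal.ofReal c) ^ (-s) := by
    intro c hc
    rw [ENNReal.rpow_neg, ENNReal.rpow_neg, ENNReal.inv_le_inv]
    exact ENNReal.rpow_le_rpow (ENNReal.ofReal_le_ofReal hc) hs0
  have hsum : 0 ≤ ∑ i, ‖x.1 i‖ ^ 2 := Finset.sum_nonneg fun i _ => by positivity
  have e : (ENNReal.ofReal (pnorm d x)) ^ (-((d : ℝ) - α)) =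
      (∏ i : Fin (d-1), (ENNReal.ofReal (pnorm d x)) ^ (-s)) *
        (ENNReal.ofReal (pnorm d x)) ^ (-s) := by
    rw [Finset.prod_const, Finset.card_univ, Fintype.card_fin, ← pow_succ, Nat.sub_add_cancel (by omega),
      ← ENNReal.rpow_natCast, ← ENNReal.rpow_mul]
    congr 1
    rw [hs]; field_simp
  rw [e]
  refine mul_le_mul' (Finset.prod_le_prod' fun i _ => ?_) ?_
  · apply key
    unfold pnorm
    apply Real.le_sqrt_of_sq_le
    have := Finset.single_le_sum (f := fun i => ‖x.1 i‖ ^ 2) (fun i _ => by positivity) (Finset.mem_univ i)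
    nlinarith [sq_nonneg x.2]
  · apply key
    unfold pnorm
    apply Real.le_sqrt_of_sq_le
    rw [sq_abs]; linarith

def auxK (d : ℕ) (α : ℝ) (x : Cyl d) : ℝ≥0∞ := (ENNReal.ofReal (pnorm d x)) ^ (-((d : ℝ) - α))

theorem auxK_meas (d : ℕ) (α : ℝ) : Measurable (auxK d α) := by
  unfold auxK
  have := (aux_pnorm_cont d).measurable
  fun_prop

theorem slab2_meas (d : ℕ) (a b : ℝ) : MeasurableSet (slab2 d a b) :=
  (measurableSet_lt measurable_const measurable_snd).inter
    (measurableSet_lt measurable_snd measurable_const)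

theorem slab2_eq (d : ℕ) (a b : ℝ) : slab2 d a b = univ ×ˢ Ioo a b := by
  ext x; simp [slab2]

theorem auxK_fin (d : ℕ) (hd : 2 ≤ d) (α : ℝ) (hα : 0 < α) (hα' : α < (d : ℝ) - 1) (M : ℝ) :
    ∫⁻ x in slab2 d (-M) M, auxK d α x < ∞ := by
  have hd0 : (0:ℝ) < d := by positivity
  set s := ((d : ℝ) - α) / d with hs
  have hs1 : s < 1 := by rw [hs, div_lt_one hd0]; linarith
  refine lt_of_le_of_lt (lintegral_mono (aux_ker_le d hd α hα')) ?_
  rw [slab2_eq, Measure.volume_eq_prod, ← Measure.prod_restrict, Measure.restrict_univ,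
    lintegral_prod_mul (f := fun x : Torus d => ∏ i, (ENNReal.ofReal ‖x i‖) ^ (-s))
      (g := fun t : ℝ => (ENNReal.ofReal |t|) ^ (-s))
      (Finset.measurable_prod _ fun i _ => by fun_prop).aemeasurable (by fun_prop)]
  refine ENNReal.mul_lt_top ?_ ?_
  · rw [volume_pi, aux_pi_lint (d-1) volume (fun t => (ENNReal.ofReal ‖t‖) ^ (-s)) (by fun_prop)]
    exact ENNReal.pow_lt_top (aux_circ s hs1)
  · exact lt_of_le_of_lt (lintegral_mono_set Ioo_subset_Ioc_self) (aux_1d s M hs1)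

def auxN (d : ℕ) (α : ℝ) : Measure (Cyl d × Cyl d) :=
  (volume.prod volume).withDensity (fun p => auxK d α (p.1 - p.2))

theorem Jalpha_eq (d : ℕ) (α : ℝ) (A B : Set (Cyl d)) (hA : MeasurableSet A) (hB : MeasurableSet B) :
    Jalpha d α A B = auxN d α (A ×ˢ B) := by
  have hm : Measurable fun p : Cyl d × Cyl d => auxK d α (p.1 - p.2) :=
    (auxK_meas d α).comp (measurable_fst.sub measurable_snd)
  rw [auxN, withDensity_apply _ (hA.prod hB), ← Measure.prod_restrict,
    lintegral_prod _ hm.aemeasurable]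
  rfl

theorem auxK_symm (d : ℕ) (α : ℝ) (x y : Cyl d) : auxK d α (x - y) = auxK d α (y - x) := by
  have : pnorm d (x - y) = pnorm d (y - x) := by
    unfold pnorm
    congr 2
    · simp only [Prod.snd_sub]; ring
    · refine Finset.sum_congr rfl fun i _ => ?_
      simp only [Prod.fst_sub, Pi.sub_apply]
      rw [norm_sub_rev]
  unfold auxK; rw [this]

theorem J_slab_fin (d : ℕ) (hd : 2 ≤ d) (α : ℝ) (hα : 0 < α) (hα' : α < (d : ℝ) - 1) (a b : ℝ) :
    Jalpha d α (slab2 d a b) (slab2 d a b) < ∞ := by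
  have i1 : (volume : Measure (Torus d)).IsAddHaarMeasure := by
    rw [volume_pi]; infer_instance
  have i2 : (volume : Measure (Cyl d)).IsAddHaarMeasure := by
    rw [Measure.volume_eq_prod]; infer_instance
  have hin : ∀ x ∈ slab2 d a b, ∫⁻ y in slab2 d a b, auxK d α (x - y) ≤
      ∫⁻ y in slab2 d (-(b-a)) (b-a), auxK d α y := by
    intro x hx
    rw [← lintegral_indicator (slab2_meas d _ _), ← lintegral_indicator (slab2_meas d _ _),
      ← lintegral_sub_right_eq_self ((slab2 d (-(b-a)) (b-a)).indicator _) x]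
    apply lintegral_mono
    intro y
    by_cases hy : y ∈ slab2 d a b
    · have : y - x ∈ slab2 d (-(b-a)) (b-a) := by
        simp only [slab2, mem_ofPred_eq, Prod.snd_sub] at hx hy ⊢
        constructor <;> linarith [hx.1, hx.2, hy.1, hy.2]
      beta_reduce
      rw [indicator_of_mem hy, indicator_of_mem this, auxK_symm]
    · simp [hy]
  have hv : volume (slab2 d a b) < ∞ := by
    rw [slab2_eq, Measure.volume_eq_prod, Measure.prod_prod]
    exact ENNReal.mul_lt_top (measure_lt_top _ _) (by simp)
  calc Jalpha d α (slab2 d a b) (slab2 d a b)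
      ≤ ∫⁻ x in slab2 d a b, ∫⁻ y in slab2 d (-(b-a)) (b-a), auxK d α y :=
        setLIntegral_mono' (slab2_meas d a b) hin
    _ < ∞ := by
      rw [setLIntegral_const]
      exact ENNReal.mul_lt_top (auxK_fin d hd α hα hα' _) hv

theorem J_mono_ae (d : ℕ) (α : ℝ) {A B : Set (Cyl d)} (h : A ≤ᵐ[volume] B) :
    Jalpha d α A A ≤ Jalpha d α B B := by
  have hr : (volume : Measure (Cyl d)).restrict A ≤ volume.restrict B := Measure.restrict_mono_ae h
  exact lintegral_mono' hr fun x => lintegral_mono' hr le_rfl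

theorem J_mono (d : ℕ) (α : ℝ) {A B : Set (Cyl d)} (h : A ⊆ B) :
    Jalpha d α A A ≤ Jalpha d α B B := J_mono_ae d α (LE.le.eventuallyLE h)

theorem J_super (d : ℕ) (α : ℝ) {A B : Set (Cyl d)} (hA : MeasurableSet A) (hB : MeasurableSet B) :
    Jalpha d α A A + Jalpha d α B B ≤
      Jalpha d α (A ∪ B) (A ∪ B) + Jalpha d α (A ∩ B) (A ∩ B) := by
  rw [Jalpha_eq _ _ _ _ hA hA, Jalpha_eq _ _ _ _ hB hB, Jalpha_eq _ _ _ _ (hA.union hB) (hA.union hB),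
    Jalpha_eq _ _ _ _ (hA.inter hB) (hA.inter hB), ← measure_union_add_inter _ (hB.prod hB)]
  refine add_le_add (measure_mono ?_) (le_of_eq ?_)
  · rintro ⟨x, y⟩ (h | h)
    · exact ⟨Or.inl h.1, Or.inl h.2⟩
    · exact ⟨Or.inr h.1, Or.inr h.2⟩
  · rw [prod_inter_prod]

def auxP (d : ℕ) (α : ℝ) (S E : Set (Cyl d)) : ℝ≥0∞ :=
  Jalpha d α S S - Jalpha d α (E ∩ S) (E ∩ S)

theorem auxP_mono (d : ℕ) (α : ℝ) {S S' E : Set (Cyl d)} (hS : MeasurableSet S)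
    (hS' : MeasurableSet S') (hE : MeasurableSet E) (h : S ⊆ S') (hf : Jalpha d α S' S' < ∞) :
    auxP d α S E ≤ auxP d α S' E := by
  have h1 := J_super d α hS (hE.inter hS')
  have h2 : Jalpha d α (S ∪ E ∩ S') (S ∪ E ∩ S') ≤ Jalpha d α S' S' :=
    J_mono d α (union_subset h inter_subset_right)
  have h3 : S ∩ (E ∩ S') = E ∩ S := by
    ext x; constructor
    · rintro ⟨a, b, c⟩; exact ⟨b, a⟩
    · rintro ⟨a, b⟩; exact ⟨b, a, h b⟩
  rw [h3] at h1
  have hfin : Jalpha d α (E ∩ S') (E ∩ S') ≠ ∞ :=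
    ((J_mono d α inter_subset_right).trans_lt hf).ne
  unfold auxP
  rw [tsub_le_iff_right]
  refine ENNReal.le_of_add_le_add_right hfin ?_
  refine (h1.trans (add_le_add_left h2 _)).trans ?_
  have h4 : Jalpha d α (E ∩ S') (E ∩ S') ≤ Jalpha d α S' S' := J_mono d α inter_subset_right
  have h5 : Jalpha d α S' S' = Jalpha d α S' S' - Jalpha d α (E ∩ S') (E ∩ S')
      + Jalpha d α (E ∩ S') (E ∩ S') := (tsub_add_cancel_of_le h4).symm
  calc _ = (Jalpha d α S' S' - Jalpha d α (E ∩ S') (E ∩ S')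
      + Jalpha d α (E ∩ S') (E ∩ S')) + Jalpha d α (E ∩ S) (E ∩ S) := by rw [← h5]
    _ ≤ _ := by rw [add_right_comm]

theorem auxP_sub (d : ℕ) (α : ℝ) {E F SE SF SU SI : Set (Cyl d)}
    (hE : MeasurableSet E) (hF : MeasurableSet F) (mE : MeasurableSet SE) (mF : MeasurableSet SF)
    (fE : Jalpha d α SE SE < ∞) (fF : Jalpha d α SF SF < ∞)
    (hEU : SE ⊆ SU) (hFU : SF ⊆ SU) (hU : SU ⊆ SE ∨ SU ⊆ SF) (hIE : SI ⊆ SE) (hIF : SI ⊆ SF)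
    (hI : ((E ∩ F) ∩ SE : Set (Cyl d)) ≤ᵐ[volume] SI) :
    auxP d α SU (E ∪ F) + auxP d α SI (E ∩ F) ≤ auxP d α SE E + auxP d α SF F := by
  have fU : Jalpha d α SU SU < ∞ := by
    rcases hU with h | h
    · exact (J_mono d α h).trans_lt fE
    · exact (J_mono d α h).trans_lt fF
  have fI : Jalpha d α SI SI < ∞ := (J_mono d α hIE).trans_lt fE
  have k1 : Jalpha d α SU SU + Jalpha d α SI SI ≤ Jalpha d α SE SE + Jalpha d α SF SF := by
    rcases hU with h | h
    · exact add_le_add (J_mono d α h) (J_mono d α hIF)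
    · rw [add_comm (Jalpha d α SE SE)]
      exact add_le_add (J_mono d α h) (J_mono d α hIE)
  have k2 := J_super d α (hE.inter mE) (hF.inter mF)
  have k3 : Jalpha d α (E ∩ SE ∪ F ∩ SF) (E ∩ SE ∪ F ∩ SF) ≤
      Jalpha d α ((E ∪ F) ∩ SU) ((E ∪ F) ∩ SU) := by
    apply J_mono
    rintro x (h | h)
    · exact ⟨Or.inl h.1, hEU h.2⟩
    · exact ⟨Or.inr h.1, hFU h.2⟩
  have k4 : Jalpha d α (E ∩ SE ∩ (F ∩ SF)) (E ∩ SE ∩ (F ∩ SF)) ≤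
      Jalpha d α ((E ∩ F) ∩ SI) ((E ∩ F) ∩ SI) := by
    apply J_mono_ae
    filter_upwards [hI] with x hx h
    exact ⟨⟨h.1.1, h.2.1⟩, hx ⟨⟨h.1.1, h.2.1⟩, h.1.2⟩⟩
  have l1 : Jalpha d α (E ∩ SE) (E ∩ SE) ≤ Jalpha d α SE SE := J_mono d α inter_subset_right
  have l2 : Jalpha d α (F ∩ SF) (F ∩ SF) ≤ Jalpha d α SF SF := J_mono d α inter_subset_right
  have l3 : Jalpha d α ((E ∪ F) ∩ SU) ((E ∪ F) ∩ SU) ≤ Jalpha d α SU SU :=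
    J_mono d α inter_subset_right
  have l4 : Jalpha d α ((E ∩ F) ∩ SI) ((E ∩ F) ∩ SI) ≤ Jalpha d α SI SI :=
    J_mono d α inter_subset_right
  have k5 := k2.trans (add_le_add k3 k4)
  unfold auxP
  generalize Jalpha d α (E ∩ SE) (E ∩ SE) = a at *
  generalize Jalpha d α (F ∩ SF) (F ∩ SF) = b at *
  generalize Jalpha d α ((E ∪ F) ∩ SU) ((E ∪ F) ∩ SU) = u at *
  generalize Jalpha d α ((E ∩ F) ∩ SI) ((E ∩ F) ∩ SI) = i at *
  generalize Jalpha d α SE SE = A at *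
  generalize Jalpha d α SF SF = B at *
  generalize Jalpha d α SU SU = U at *
  generalize Jalpha d α SI SI = I at *
  clear k2 k3 k4
  have ha := (l1.trans_lt fE).ne
  have hb := (l2.trans_lt fF).ne
  have hu := (l3.trans_lt fU).ne
  have hi := (l4.trans_lt fI).ne
  lift A to NNReal using fE.ne
  lift B to NNReal using fF.ne
  lift U to NNReal using fU.ne
  lift I to NNReal using fI.ne
  lift a to NNReal using ha
  lift b to NNReal using hb
  lift u to NNReal using hu
  lift i to NNReal using hi
  norm_cast at *
  rw [← NNReal.coe_le_coe] at *
  push_cast [NNReal.coe_sub l1, NNReal.coe_sub l2, NNReal.coe_sub l3, NNReal.coe_sub l4] at *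
  linarith

open Classical in
def auxT (d : ℕ) (E : Set (Cyl d)) (R : ℝ) : Set (Cyl d) :=
  if E = ∅ then ∅ else if BddTop d E then slab2 d (-R) (rhoSup d E) else slab2 d (-R) R

theorem auxT_meas (d : ℕ) (E : Set (Cyl d)) (R : ℝ) : MeasurableSet (auxT d E R) := by
  unfold auxT; split_ifs
  · exact MeasurableSet.empty
  · exact slab2_meas _ _ _
  · exact slab2_meas _ _ _

theorem auxT_fin (d : ℕ) (hd : 2 ≤ d) (α : ℝ) (hα : 0 < α) (hα' : α < (d : ℝ) - 1)
    (E : Set (Cyl d)) (R : ℝ) : Jalpha d α (auxT d E R) (auxT d E R) < ∞ := by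
  unfold auxT; split_ifs
  · simp [Jalpha]
  · exact J_slab_fin d hd α hα hα' _ _
  · exact J_slab_fin d hd α hα hα' _ _

theorem slab2_mono (d : ℕ) {a b a' b' : ℝ} (h : a' ≤ a) (h' : b ≤ b') :
    slab2 d a b ⊆ slab2 d a' b' := fun _ hx => ⟨h.trans_lt hx.1, hx.2.trans_le h'⟩

theorem auxT_monoR (d : ℕ) (E : Set (Cyl d)) : Monotone (auxT d E) := by
  intro R R' h
  unfold auxT; split_ifs
  · exact le_rfl
  · exact slab2_mono d (by linarith) le_rfl
  · exact slab2_mono d (by linarith) h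

theorem Palpha_eq (d : ℕ) (α : ℝ) (E : Set (Cyl d)) :
    Palpha d α E = limsup (fun R => auxP d α (auxT d E R) E) atTop := by
  unfold Palpha auxT auxP PalphaSlab
  split_ifs <;> simp [Jalpha]

theorem Palpha_tendsto (d : ℕ) (hd : 2 ≤ d) (α : ℝ) (hα : 0 < α) (hα' : α < (d : ℝ) - 1)
    (E : Set (Cyl d)) (hE : MeasurableSet E) :
    Tendsto (fun R => auxP d α (auxT d E R) E) atTop (nhds (Palpha d α E)) := by
  have hm : Monotone (fun R => auxP d α (auxT d E R) E) := fun R R' h =>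
    auxP_mono d α (auxT_meas d E R) (auxT_meas d E R') hE (auxT_monoR d E h)
      (auxT_fin d hd α hα hα' E R')
  have := tendsto_atTop_iSup hm
  rw [Palpha_eq, this.limsup_eq]
  exact this

theorem le_rho (d : ℕ) {E : Set (Cyl d)} (hb : BddTop d E) {x : Cyl d} (hx : x ∈ E) :
    x.2 ≤ rhoSup d E :=
  le_csInf hb fun _ hr => (hr hx).le

theorem rho_le (d : ℕ) {E : Set (Cyl d)} (hne : E ≠ ∅) {c : ℝ} (h : ∀ x ∈ E, x.2 ≤ c) :
    rhoSup d E ≤ c := by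
  obtain ⟨x, hx⟩ := nonempty_iff_ne_empty.2 hne
  refine le_of_forall_gt_imp_ge_of_dense fun r hr => csInf_le ⟨x.2, fun r hr => (hr hx).le⟩ ?_
  intro y hy
  exact (h y hy).trans_lt hr

theorem bdd_mono (d : ℕ) {A B : Set (Cyl d)} (h : A ⊆ B) (hb : BddTop d B) : BddTop d A :=
  hb.imp fun _ hr => h.trans hr

theorem auxT_mono (d : ℕ) {A B : Set (Cyl d)} (h : A ⊆ B) :
    ∀ᶠ R in atTop, auxT d A R ⊆ auxT d B R := by
  filter_upwards [eventually_ge_atTop (rhoSup d A)] with R hR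
  by_cases hA : A = ∅
  · simp [auxT, hA]
  have hB : B ≠ ∅ := fun hB => hA (subset_empty_iff.1 (hB ▸ h))
  by_cases bB : BddTop d B
  · have bA := bdd_mono d h bB
    simp only [auxT, hA, hB, bA, bB, if_true, if_false]
    exact slab2_mono d le_rfl (rho_le d hA fun x hx => le_rho d bB (h hx))
  · by_cases bA : BddTop d A
    · simp only [auxT, hA, hB, bA, bB, if_true, if_false]
      exact slab2_mono d le_rfl hR
    · simp only [auxT, hA, hB, bA, bB, if_false]
      exact le_rfl

theorem auxT_ae (d : ℕ) {A B : Set (Cyl d)} (h : A ⊆ B) (R : ℝ) :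
    (A ∩ auxT d B R : Set (Cyl d)) ≤ᵐ[volume] auxT d A R := by
  by_cases hA : A = ∅
  · exact LE.le.eventuallyLE (by simp [hA])
  have hB : B ≠ ∅ := fun hB => hA (subset_empty_iff.1 (hB ▸ h))
  by_cases bA : BddTop d A
  · have hz : ∀ᵐ x : Cyl d, x.2 ≠ rhoSup d A := by
      have : {x : Cyl d | ¬ x.2 ≠ rhoSup d A} = univ ×ˢ {rhoSup d A} := by
        ext x; simp
      rw [ae_iff, this, Measure.volume_eq_prod, Measure.prod_prod]
      simp
    filter_upwards [hz] with x hx hxA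
    have h1 : -R < x.2 := by
      have := hxA.2
      unfold auxT at this
      split_ifs at this
      · exact this.elim
      · exact this.1
      · exact this.1
    have : x ∈ slab2 d (-R) (rhoSup d A) := ⟨h1, lt_of_le_of_ne (le_rho d bA hxA.1) hx⟩
    change x ∈ auxT d A R
    simpa only [auxT, hA, bA, if_true, if_false] using this
  · have bB : ¬ BddTop d B := fun hb => bA (bdd_mono d h hb)
    apply LE.le.eventuallyLE
    simp only [auxT, hA, hB, bA, bB, if_false]
    exact inter_subset_right

theorem auxT_union (d : ℕ) (E F : Set (Cyl d)) (R : ℝ) :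
    auxT d (E ∪ F) R ⊆ auxT d E R ∨ auxT d (E ∪ F) R ⊆ auxT d F R := by
  by_cases hE : E = ∅
  · right; simp [hE]
  by_cases hF : F = ∅
  · left; simp [hF]
  have hU : E ∪ F ≠ ∅ := fun h => hE (union_empty_iff.1 h).1
  by_cases bE : BddTop d E
  · by_cases bF : BddTop d F
    · have bU : BddTop d (E ∪ F) := by
        obtain ⟨r, hr⟩ := bE
        obtain ⟨r', hr'⟩ := bF
        refine ⟨max r r', ?_⟩
        rintro x (hx | hx)
        · exact lt_max_of_lt_left (show x.2 < r from hr hx)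
        · exact lt_max_of_lt_right (show x.2 < r' from hr' hx)
      have hm : rhoSup d (E ∪ F) ≤ max (rhoSup d E) (rhoSup d F) := by
        apply rho_le d hU
        rintro x (hx | hx)
        · exact le_max_of_le_left (le_rho d bE hx)
        · exact le_max_of_le_right (le_rho d bF hx)
      simp only [auxT, hE, hF, hU, bE, bF, bU, if_true, if_false]
      rcases le_max_iff.1 hm with h | h
      · left; exact slab2_mono d le_rfl h
      · right; exact slab2_mono d le_rfl h
    · right
      have bU : ¬ BddTop d (E ∪ F) := fun hb => bF (bdd_mono d subset_union_right hb)
      simp only [auxT, hF, hU, bF, bU, if_false]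
      exact le_rfl
  · left
    have bU : ¬ BddTop d (E ∪ F) := fun hb => bE (bdd_mono d subset_union_left hb)
    simp only [auxT, hE, hU, bE, bU, if_false]
    exact le_rfl

/-- Submodularity of the `α`-Riesz perimeter. -/
theorem Palpha_submodular (d : ℕ) (hd : 2 ≤ d) (α : ℝ) (hα : 0 < α)
    (hα' : α < (d : ℝ) - 1) (E F : Set (Cyl d))
    (hE : MeasurableSet E) (hF : MeasurableSet F) :
    Palpha d α (E ∪ F) + Palpha d α (E ∩ F) ≤ Palpha d α E + Palpha d α F := by
  refine le_of_tendsto_of_tendsto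
    ((Palpha_tendsto d hd α hα hα' _ (hE.union hF)).add (Palpha_tendsto d hd α hα hα' _ (hE.inter hF)))
    ((Palpha_tendsto d hd α hα hα' _ hE).add (Palpha_tendsto d hd α hα hα' _ hF)) ?_
  filter_upwards [auxT_mono d (subset_union_left : E ⊆ E ∪ F),
    auxT_mono d (subset_union_right : F ⊆ E ∪ F), auxT_mono d (inter_subset_left : E ∩ F ⊆ E),
    auxT_mono d (inter_subset_right : E ∩ F ⊆ F)] with R h1 h2 h3 h4
  exact auxP_sub d α hE hF (auxT_meas d E R) (auxT_meas d F R) (auxT_fin d hd α hα hα' E R)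
    (auxT_fin d hd α hα hα' F R) h1 h2 (auxT_union d E F R) h3 h4 (auxT_ae d inter_subset_left R)
end
end
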